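/- P-type setup: let κ₁ < κ₂ < κ₃ < κ₄ with κ₂+κ₃ ≠ κ₁+κ₄, a₂₃ = (κ₂+κ₃)/2, a₁₄ = (κ₁+κ₄)/2, c₂₃ = (κ₃−κ₂)²/4, and let (b₁,b₂) solve b₁ + 2a₂₃b₂ = ω₂₃, b₁ + 2a₁₄b₂ = ω₁₄ with ω_{ij} = κᵢ²+κᵢκⱼ+κⱼ². Assume 0 < α < min{√c₂₃, ((b₂−3a₂₃)² − c₂₃)/(4|a₁₄−a₂₃|), c₂₃/(3|a₁₄−a₂₃|)} and set η_I := 2α(a₁₄ − a₂₃). Define λ_{1,±}(η) := iη(b₂ − 3a₂₃ ± γ_{c₂₃}(±η)) for η = η_R + iη_I, η_R ∈ ℝ, where γ_{c₂₃} is the principal square root of c₂₃ + i(·). Then: (i) for every η_R ≠ 0, the function η_R ↦ Re λ_{1,±}(η_R + iη_I) is differentiable and η_R·(d/dη_R)Re λ_{1,±}(η_R + iη_I) < 0; (ii) Re λ_{1,±}(η_R + iη_I) ≤ Re λ_{1,±}(iη_I) for all η_R ∈ ℝ; and (iii) there is a constant C > 0 depending only on κ₁, κ₂, κ₃, κ₄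 such that Re λ_{1,±}(iη_I) ≤ −Cα for every α in the stated range. -/

import Mathlib

/-- principal square root of c + iμ, μ complex -/
noncomputable def gamC (c : ℝ) (μ : ℂ) : ℂ := ((c : ℂ) + Complex.I * μ) ^ ((1 : ℂ)/2)

/-- λ₊(η) = iη(b + γ_c(η)) for complex η -/
noncomputable def lamCP (c b : ℝ) (η : ℂ) : ℂ := Complex.I * η * ((b : ℂ) + gamC c η)

/-- λ₋(η) = iη(b − γ_c(−η)) for complex η -/
noncomputable def lamCM (c b : ℝ) (η : ℂ) : ℂ := Complex.I * η * ((b : ℂ) - gamC c (-η))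

/-- η_R ↦ Re λ₊(η_R + iη_I) -/
noncomputable def reP (c b ηI : ℝ) (s : ℝ) : ℝ :=
  (lamCP c b ((s : ℂ) + (ηI : ℂ) * Complex.I)).re

/-- η_R ↦ Re λ₋(η_R + iη_I) -/
noncomputable def reM (c b ηI : ℝ) (s : ℝ) : ℝ :=
  (lamCM c b ((s : ℂ) + (ηI : ℂ) * Complex.I)).re

/-!
Write `γ = gamC c η = p + iq`. Then `p ≥ 0` and `γ² = c + iη` gives `p² - q² = c - Im η` and
`2pq = Re η`, so that `iηγ = γ³ - cγ` has a real part depending on `p` alone, and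
`Re λ₊ = -b Im η - 2p³ + (2c - 3 Im η) p`. Along a horizontal line `p` is smallest on the imaginary
axis and the cubic decreases from there on, while the derivative of `Re λ₊` is
`-q (3/2 + c / (2|γ|²))`, whose sign is opposite to that of `Re η = 2pq`. The reflection
`(b, η) ↦ (-b, -η)` exchanges `λ₊` and `λ₋`.

On the imaginary axis `Re λ₊(iη_I) = -η_I (b + √(c - η_I))`. Because `[κ₂, κ₃]` lies inside
`[κ₁, κ₄]`, the number `b = b₂ - 3a₂₃` has the sign of `a₁₄ - a₂₃` and `|b| > √c₂₃`, so the first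
summand dominates.
-/

section PrincipalRoot

variable (c : ℝ) (μ : ℂ)

lemma gamC_sq : gamC c μ ^ 2 = c + Complex.I * μ := by
  simp only [gamC, one_div, Complex.cpow_ofNat_inv_pow]

lemma gamC_re_nonneg : 0 ≤ (gamC c μ).re := by
  rw [gamC, one_div, Complex.cpow_inv_two_re]
  exact Real.sqrt_nonneg _

lemma gamC_re_sq_sub_im_sq : (gamC c μ).re ^ 2 - (gamC c μ).im ^ 2 = c - μ.im := by
  simpa [pow_two, sub_eq_add_neg] using congrArg Complex.re (gamC_sq c μ)

lemma two_mul_gamC_re_mul_im : 2 * (gamC c μ).re * (gamC c μ).im = μ.re := by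
  have him := congrArg Complex.im (gamC_sq c μ)
  simp only [pow_two, Complex.mul_im, Complex.add_im, Complex.ofReal_im, Complex.I_re,
    Complex.I_im] at him
  linarith

lemma sqrt_sub_im_le_gamC_re : √(c - μ.im) ≤ (gamC c μ).re :=
  Real.sqrt_le_iff.mpr ⟨gamC_re_nonneg c μ, by
    linarith [gamC_re_sq_sub_im_sq c μ, sq_nonneg (gamC c μ).im]⟩

variable {c μ}

/-- For `c < μ.im` the root is purely imaginary, in agreement with `√` being `0` at negative
numbers. -/
lemma gamC_re_of_re_eq_zero (hμ : μ.re = 0) : (gamC c μ).re = √(c - μ.im) := by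
  have hre_im := two_mul_gamC_re_mul_im c μ
  rw [hμ, mul_assoc, mul_eq_zero_iff_left two_ne_zero, mul_eq_zero] at hre_im
  rw [← gamC_re_sq_sub_im_sq c μ]
  rcases hre_im with hre | him
  · rw [hre, Real.sqrt_eq_zero_of_nonpos (by nlinarith [sq_nonneg (gamC c μ).im])]
  · rw [him, zero_pow two_ne_zero, sub_zero, Real.sqrt_sq (gamC_re_nonneg c μ)]

lemma gamC_ne_zero (hμ : (c : ℂ) + Complex.I * μ ≠ 0) : gamC c μ ≠ 0 :=
  fun h => hμ (by rw [← gamC_sq, h, zero_pow two_ne_zero])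

lemma hasDerivAt_gamC (hμ : (c : ℂ) + Complex.I * μ ∈ Complex.slitPlane) :
    HasDerivAt (gamC c) (Complex.I / (2 * gamC c μ)) μ := by
  have hradicand : HasDerivAt (fun z : ℂ => (c : ℂ) + Complex.I * z) Complex.I μ := by
    simpa using ((hasDerivAt_id μ).const_mul Complex.I).const_add (c : ℂ)
  refine (hradicand.cpow_const (c := (1 : ℂ) / 2) hμ).congr_deriv ?_
  have hradicand_ne : (c : ℂ) + Complex.I * μ ≠ 0 := Complex.slitPlane_ne_zero hμ
  have hroot_ne := gamC_ne_zero hradicand_ne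
  rw [Complex.cpow_sub _ _ hradicand_ne, Complex.cpow_one, ← gamC, ← gamC_sq]
  field_simp

end PrincipalRoot

section ComplexEigenvalue

variable (c b : ℝ) (η : ℂ)

lemma lamCP_eq_gamC_cubic :
    lamCP c b η = Complex.I * b * η + (gamC c η ^ 3 - c * gamC c η) := by
  rw [lamCP]
  linear_combination -gamC c η * gamC_sq c η

lemma lamCP_re :
    (lamCP c b η).re
      = -b * η.im - 2 * (gamC c η).re ^ 3 + (2 * c - 3 * η.im) * (gamC c η).re := by
  rw [lamCP_eq_gamC_cubic]
  simp only [pow_succ, pow_zero, one_mul, zero_mul, mul_zero, sub_self, zero_add, zero_sub,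
    sub_zero, Complex.add_re, Complex.sub_re, Complex.mul_re, Complex.mul_im, Complex.I_re,
    Complex.I_im, Complex.ofReal_re, Complex.ofReal_im]
  linear_combination 3 * (gamC c η).re * gamC_re_sq_sub_im_sq c η

lemma lamCM_eq_lamCP_neg : lamCM c b η = lamCP c (-b) (-η) := by
  rw [lamCM, lamCP]
  push_cast
  ring

variable {c b η}

lemma lamCP_re_of_re_eq_zero (hη : η.re = 0) :
    (lamCP c b η).re = -η.im * (b + √(c - η.im)) := by
  simp [lamCP, hη, gamC_re_of_re_eq_zero hη]

lemma lamCP_re_le (hc : 0 ≤ c) : (lamCP c b η).re ≤ -η.im * (b + √(c - η.im)) := by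
  rw [lamCP_re]
  obtain ⟨hroot_sq, hroot_cube⟩ :
      c - η.im ≤ √(c - η.im) ^ 2 ∧ √(c - η.im) ^ 3 = (c - η.im) * √(c - η.im) := by
    rcases le_total 0 (c - η.im) with h | h
    · exact ⟨(Real.sq_sqrt h).ge, by rw [pow_succ, Real.sq_sqrt h]⟩
    · simpa [Real.sqrt_eq_zero_of_nonpos h] using h
  have hroot_nonneg := Real.sqrt_nonneg (c - η.im)
  have hroot_le := sqrt_sub_im_le_gamC_re c η
  generalize (gamC c η).re = p at *
  generalize √(c - η.im) = r at *
  have hfactor : 0 ≤ (p - r) * (2 * p ^ 2 + 2 * p * r + 2 * r ^ 2 - 3 * (c - η.im) + c) :=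
    mul_nonneg (sub_nonneg.mpr hroot_le) (by
      linarith [mul_le_mul_of_nonneg_right hroot_le hroot_nonneg,
        pow_le_pow_left₀ hroot_nonneg hroot_le 2, sq_nonneg r])
  linarith

lemma hasDerivAt_lamCP (hη : (c : ℂ) + Complex.I * η ∈ Complex.slitPlane) :
    HasDerivAt (lamCP c b)
      (Complex.I * (b + (3 / 2 : ℝ) * gamC c η - (c / 2 : ℝ) * (gamC c η)⁻¹)) η := by
  have hγ := hasDerivAt_gamC hη
  have hcubic := ((hasDerivAt_id η).const_mul (Complex.I * (b : ℂ))).add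
    ((hγ.pow 3).sub (hγ.const_mul (c : ℂ)))
  refine (hcubic.congr_of_eventuallyEq (.of_forall (lamCP_eq_gamC_cubic c b))).congr_deriv ?_
  have hroot_ne := gamC_ne_zero (Complex.slitPlane_ne_zero hη)
  push_cast
  field_simp
  ring

end ComplexEigenvalue

section RealPart

variable {c b ηI s : ℝ}

lemma reP_zero : reP c b ηI 0 = -ηI * (b + √(c - ηI)) := by
  simpa [reP] using lamCP_re_of_re_eq_zero (c := c) (b := b) (η := ηI * Complex.I) (by simp)

lemma reP_le_reP_zero (hc : 0 ≤ c) : reP c b ηI s ≤ reP c b ηI 0 := by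
  rw [reP_zero]
  simpa [reP] using lamCP_re_le (b := b) (η := (s : ℂ) + ηI * Complex.I) hc

lemma hasDerivAt_reP (hs : s ≠ 0) :
    HasDerivAt (reP c b ηI)
      (-((gamC c (s + ηI * Complex.I)).im
        * (3 / 2 + c / (2 * Complex.normSq (gamC c (s + ηI * Complex.I)))))) s := by
  have hslit : (c : ℂ) + Complex.I * (s + ηI * Complex.I) ∈ Complex.slitPlane :=
    Complex.mem_slitPlane_iff.mpr (.inr (by simpa using hs))
  refine ((hasDerivAt_lamCP hslit).comp_add_const (s : ℂ) _).real_of_complex.congr_deriv ?_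
  rw [Complex.I_mul_re, Complex.sub_im, Complex.add_im, Complex.ofReal_im, Complex.im_ofReal_mul,
    Complex.im_ofReal_mul, Complex.inv_im]
  ring

lemma mul_deriv_reP_neg (hc : 0 ≤ c) (hs : s ≠ 0) : s * deriv (reP c b ηI) s < 0 := by
  rw [(hasDerivAt_reP hs).deriv]
  have hre_im : 2 * (gamC c (s + ηI * Complex.I)).re * (gamC c (s + ηI * Complex.I)).im = s := by
    simpa using two_mul_gamC_re_mul_im c (s + ηI * Complex.I)
  have hre := gamC_re_nonneg c (s + ηI * Complex.I)
  generalize gamC c (s + ηI * Complex.I) = γ at *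
  have him : γ.im ≠ 0 := fun h => hs (by rw [← hre_im, h, mul_zero])
  have hre_pos : 0 < γ.re := hre.lt_of_ne' fun h => hs (by rw [← hre_im, h]; ring)
  have hγ : 0 < Complex.normSq γ := Complex.normSq_pos.mpr fun h => him (by simp [h])
  have hpos : 0 < 2 * γ.re * γ.im ^ 2 * (3 / 2 + c / (2 * Complex.normSq γ)) := by positivity
  rw [← hre_im]
  linarith

lemma reM_eq_reP_comp_neg : reM c b ηI = fun s => reP c (-b) (-ηI) (-s) := by
  funext s
  rw [reM, reP, lamCM_eq_lamCP_neg, neg_add, Complex.ofReal_neg, Complex.ofReal_neg, neg_mul]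

lemma reM_le_reM_zero (hc : 0 ≤ c) : reM c b ηI s ≤ reM c b ηI 0 := by
  simpa only [reM_eq_reP_comp_neg, neg_zero] using reP_le_reP_zero hc

lemma differentiableAt_reM (hs : s ≠ 0) : DifferentiableAt ℝ (reM c b ηI) s := by
  rw [reM_eq_reP_comp_neg, differentiableAt_comp_neg]
  exact (hasDerivAt_reP (neg_ne_zero.mpr hs)).differentiableAt

lemma mul_deriv_reM_neg (hc : 0 ≤ c) (hs : s ≠ 0) : s * deriv (reM c b ηI) s < 0 := by
  rw [reM_eq_reP_comp_neg, deriv_comp_neg, mul_neg, ← neg_mul]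
  exact mul_deriv_reP_neg hc (neg_ne_zero.mpr hs)

lemma reP_zero_le_neg_mul_abs {r : ℝ} (hb : 0 ≤ ηI * b) (hr : c + |ηI| ≤ r) :
    reP c b ηI 0 ≤ -(|b| - √r) * |ηI| := by
  have hroot : |ηI| * √(c - ηI) ≤ |ηI| * √r := by
    gcongr
    linarith [neg_abs_le ηI]
  calc reP c b ηI 0 = -(ηI * b) + -ηI * √(c - ηI) := by rw [reP_zero]; ring
    _ ≤ -(ηI * b) + |ηI| * √(c - ηI) := by gcongr; exact neg_le_abs ηI
    _ ≤ -(ηI * b) + |ηI| * √r := by gcongr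
    _ = -(|b| - √r) * |ηI| := by rw [← abs_of_nonneg hb, abs_mul]; ring

lemma reM_zero_le_neg_mul_abs {r : ℝ} (hb : 0 ≤ ηI * b) (hr : c + |ηI| ≤ r) :
    reM c b ηI 0 ≤ -(|b| - √r) * |ηI| := by
  simpa only [reM_eq_reP_comp_neg, neg_zero, abs_neg] using
    reP_zero_le_neg_mul_abs (b := -b) (ηI := -ηI) (by rwa [neg_mul_neg]) (by rwa [abs_neg])

lemma exists_pos_forall_reP_zero_le_and_reM_zero_le {d : ℝ} (hdb : |d| * √c < d * b) :
    ∃ C : ℝ, 0 < C ∧ ∀ α : ℝ, 0 < α → α < (b ^ 2 - c) / (4 * |d|) →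
      reP c b (2 * α * d) 0 ≤ -C * α ∧ reM c b (2 * α * d) 0 ≤ -C * α := by
  have hdb_pos : 0 < d * b := (by positivity : 0 ≤ |d| * √c).trans_lt hdb
  have hd : 0 < |d| := abs_pos.mpr (left_ne_zero_of_mul hdb_pos.ne')
  have hb : √c < |b| := by
    rw [← abs_of_pos hdb_pos, abs_mul] at hdb
    exact lt_of_mul_lt_mul_left hdb hd.le
  have hbc : c < b ^ 2 := by
    rwa [Real.sqrt_lt' ((Real.sqrt_nonneg c).trans_lt hb), sq_abs] at hb
  have hgap : √((b ^ 2 + c) / 2) < |b| := by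
    rw [Real.sqrt_lt' ((Real.sqrt_nonneg c).trans_lt hb), sq_abs]
    linarith
  refine ⟨(|b| - √((b ^ 2 + c) / 2)) * (2 * |d|),
    mul_pos (sub_pos.mpr hgap) (by positivity), fun α hα hα_lt => ?_⟩
  have hη_abs : |2 * α * d| = 2 * |d| * α := by
    rw [abs_mul, abs_of_pos (by positivity)]
    ring
  have hη_b : 0 ≤ 2 * α * d * b := by
    rw [mul_assoc]
    positivity
  have hr : c + |2 * α * d| ≤ (b ^ 2 + c) / 2 := by
    rw [lt_div_iff₀ (by positivity)] at hα_lt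
    linarith
  rw [← neg_mul, mul_assoc (-_) _ α, ← hη_abs]
  exact ⟨reP_zero_le_neg_mul_abs hη_b hr, reM_zero_le_neg_mul_abs hη_b hr⟩

end RealPart

lemma abs_sub_mul_sqrt_lt_of_nested_intervals {κ₁ κ₂ κ₃ κ₄ a₂₃ a₁₄ b₁ b₂ : ℝ}
    (h12 : κ₁ < κ₂) (h23 : κ₂ ≤ κ₃) (h34 : κ₃ < κ₄)
    (ha23 : a₂₃ = (κ₂ + κ₃) / 2) (ha14 : a₁₄ = (κ₁ + κ₄) / 2)
    (hb1 : b₁ + 2 * a₂₃ * b₂ = κ₂ ^ 2 + κ₂ * κ₃ + κ₃ ^ 2)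
    (hb2 : b₁ + 2 * a₁₄ * b₂ = κ₁ ^ 2 + κ₁ * κ₄ + κ₄ ^ 2) :
    |a₁₄ - a₂₃| * √((κ₃ - κ₂) ^ 2 / 4) < (a₁₄ - a₂₃) * (b₂ - 3 * a₂₃) := by
  have hsqrt : √((κ₃ - κ₂) ^ 2 / 4) = (κ₃ - κ₂) / 2 := by
    rw [show (κ₃ - κ₂) ^ 2 / 4 = ((κ₃ - κ₂) / 2) ^ 2 by ring, Real.sqrt_sq (by linarith)]
  -- `ω_{ij} = 3a_{ij}² + c_{ij}` turns `hb2 - hb1` into a formula for `b₂ - 3a₂₃`.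
  have hspeed : (a₁₄ - a₂₃) * (b₂ - 3 * a₂₃)
      = 3 / 2 * (a₁₄ - a₂₃) ^ 2 + ((κ₄ - κ₁) ^ 2 - (κ₃ - κ₂) ^ 2) / 8 := by
    subst ha23 ha14
    linear_combination (hb2 - hb1) / 2
  have hmidpoints : |a₁₄ - a₂₃| < (κ₄ - κ₁) / 2 - (κ₃ - κ₂) / 2 :=
    abs_lt.mpr ⟨by linarith, by linarith⟩
  calc |a₁₄ - a₂₃| * √((κ₃ - κ₂) ^ 2 / 4)
      = |a₁₄ - a₂₃| * ((κ₃ - κ₂) / 2) := by rw [hsqrt]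
    _ ≤ |a₁₄ - a₂₃| * (((κ₄ - κ₁) / 2 + (κ₃ - κ₂) / 2) / 2) := by gcongr; linarith
    _ < ((κ₄ - κ₁) / 2 - (κ₃ - κ₂) / 2) * (((κ₄ - κ₁) / 2 + (κ₃ - κ₂) / 2) / 2) := by
      gcongr
      linarith
    _ = ((κ₄ - κ₁) ^ 2 - (κ₃ - κ₂) ^ 2) / 8 := by ring
    _ ≤ (a₁₄ - a₂₃) * (b₂ - 3 * a₂₃) := by
      rw [hspeed]
      exact le_add_of_nonneg_left (by positivity)

theorem resonant_eigenvalues_23_soliton_P_general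
    {κ₁ κ₂ κ₃ κ₄ a₂₃ a₁₄ c₂₃ ω₂₃ ω₁₄ b₁ b₂ : ℝ}
    (h12 : κ₁ < κ₂) (h23 : κ₂ ≤ κ₃) (h34 : κ₃ < κ₄)
    (ha23 : a₂₃ = (κ₂ + κ₃) / 2) (ha14 : a₁₄ = (κ₁ + κ₄) / 2)
    (hc23 : c₂₃ = (κ₃ - κ₂) ^ 2 / 4)
    (hω23 : ω₂₃ = κ₂ ^ 2 + κ₂ * κ₃ + κ₃ ^ 2) (hω14 : ω₁₄ = κ₁ ^ 2 + κ₁ * κ₄ + κ₄ ^ 2)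
    (hb1 : b₁ + 2 * a₂₃ * b₂ = ω₂₃) (hb2 : b₁ + 2 * a₁₄ * b₂ = ω₁₄) :
    (∀ α : ℝ,
      (∀ ηR : ℝ, ηR ≠ 0 →
        (DifferentiableAt ℝ (reP c₂₃ (b₂ - 3 * a₂₃) (2 * α * (a₁₄ - a₂₃))) ηR
          ∧ ηR * deriv (reP c₂₃ (b₂ - 3 * a₂₃) (2 * α * (a₁₄ - a₂₃))) ηR < 0)
        ∧ (DifferentiableAt ℝ (reM c₂₃ (b₂ - 3 * a₂₃) (2 * α * (a₁₄ - a₂₃))) ηR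
          ∧ ηR * deriv (reM c₂₃ (b₂ - 3 * a₂₃) (2 * α * (a₁₄ - a₂₃))) ηR < 0))
      ∧ (∀ ηR : ℝ,
          reP c₂₃ (b₂ - 3 * a₂₃) (2 * α * (a₁₄ - a₂₃)) ηR
            ≤ reP c₂₃ (b₂ - 3 * a₂₃) (2 * α * (a₁₄ - a₂₃)) 0
          ∧ reM c₂₃ (b₂ - 3 * a₂₃) (2 * α * (a₁₄ - a₂₃)) ηR
            ≤ reM c₂₃ (b₂ - 3 * a₂₃) (2 * α * (a₁₄ - a₂₃)) 0))
    ∧ (∃ C : ℝ, 0 < C ∧ ∀ α : ℝ, 0 < α →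
        α < ((b₂ - 3 * a₂₃) ^ 2 - c₂₃) / (4 * |a₁₄ - a₂₃|) →
        reP c₂₃ (b₂ - 3 * a₂₃) (2 * α * (a₁₄ - a₂₃)) 0 ≤ -C * α
        ∧ reM c₂₃ (b₂ - 3 * a₂₃) (2 * α * (a₁₄ - a₂₃)) 0 ≤ -C * α) := by
  subst hc23 hω23 hω14
  have hc : 0 ≤ (κ₃ - κ₂) ^ 2 / 4 := by positivity
  exact ⟨fun _ =>
      ⟨fun _ hs => ⟨⟨(hasDerivAt_reP hs).differentiableAt, mul_deriv_reP_neg hc hs⟩,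
        ⟨differentiableAt_reM hs, mul_deriv_reM_neg hc hs⟩⟩,
        fun _ => ⟨reP_le_reP_zero hc, reM_le_reM_zero hc⟩⟩,
    exists_pos_forall_reP_zero_le_and_reM_zero_le
      (abs_sub_mul_sqrt_lt_of_nested_intervals h12 h23 h34 ha23 ha14 hb1 hb2)⟩

/-- the resonant continuous eigenvalues λ_{1,±}(η_R + iη_I)
associated with the [2,3]-soliton of a P-type 2-line soliton lie in the
stable half plane, uniformly in the admissible weights α. -/
theorem resonant_eigenvalues_23_soliton_P
    (κ₁ κ₂ κ₃ κ₄ a₂₃ a₁₄ c₂₃ ω₂₃ ω₁₄ b₁ b₂ : ℝ)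
    (h12 : κ₁ < κ₂) (h23 : κ₂ < κ₃) (h34 : κ₃ < κ₄)
    (hne : κ₂ + κ₃ ≠ κ₁ + κ₄)
    (ha23 : a₂₃ = (κ₂ + κ₃)/2) (ha14 : a₁₄ = (κ₁ + κ₄)/2)
    (hc23 : c₂₃ = (κ₃ - κ₂)^2/4)
    (hω23 : ω₂₃ = κ₂^2 + κ₂*κ₃ + κ₃^2) (hω14 : ω₁₄ = κ₁^2 + κ₁*κ₄ + κ₄^2)
    (hb1 : b₁ + 2*a₂₃*b₂ = ω₂₃) (hb2 : b₁ + 2*a₁₄*b₂ = ω₁₄) :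
    (∀ α : ℝ, 0 < α → α < Real.sqrt c₂₃ →
      α < ((b₂ - 3*a₂₃)^2 - c₂₃)/(4*|a₁₄ - a₂₃|) →
      α < c₂₃/(3*|a₁₄ - a₂₃|) →
      ((∀ ηR : ℝ, ηR ≠ 0 →
          (DifferentiableAt ℝ (reP c₂₃ (b₂ - 3*a₂₃) (2*α*(a₁₄ - a₂₃))) ηR
            ∧ ηR * deriv (reP c₂₃ (b₂ - 3*a₂₃) (2*α*(a₁₄ - a₂₃))) ηR < 0)
          ∧ (DifferentiableAt ℝ (reM c₂₃ (b₂ - 3*a₂₃) (2*α*(a₁₄ - a₂₃))) ηR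
            ∧ ηR * deriv (reM c₂₃ (b₂ - 3*a₂₃) (2*α*(a₁₄ - a₂₃))) ηR < 0))
        ∧ (∀ ηR : ℝ,
            reP c₂₃ (b₂ - 3*a₂₃) (2*α*(a₁₄ - a₂₃)) ηR
              ≤ reP c₂₃ (b₂ - 3*a₂₃) (2*α*(a₁₄ - a₂₃)) 0
            ∧ reM c₂₃ (b₂ - 3*a₂₃) (2*α*(a₁₄ - a₂₃)) ηR
              ≤ reM c₂₃ (b₂ - 3*a₂₃) (2*α*(a₁₄ - a₂₃)) 0)))
    ∧ (∃ C : ℝ, 0 < C ∧ ∀ α : ℝ, 0 < α → α < Real.sqrt c₂₃ →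
        α < ((b₂ - 3*a₂₃)^2 - c₂₃)/(4*|a₁₄ - a₂₃|) →
        α < c₂₃/(3*|a₁₄ - a₂₃|) →
        reP c₂₃ (b₂ - 3*a₂₃) (2*α*(a₁₄ - a₂₃)) 0 ≤ -C*α
        ∧ reM c₂₃ (b₂ - 3*a₂₃) (2*α*(a₁₄ - a₂₃)) 0 ≤ -C*α) := by
  obtain ⟨hline, C, hC, hrate⟩ := resonant_eigenvalues_23_soliton_P_general
    h12 h23.le h34 ha23 ha14 hc23 hω23 hω14 hb1 hb2
  exact ⟨fun α _ _ _ _ => hline α, C, hC, fun α hα _ hα_lt _ => hrate α hα hα_lt⟩
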